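/- arXiv:2504.15475 — 4 statements merged into one kernel-verified Lean document; each statement's English description precedes it below -/
import Mathlib

section
/- Let Ω be a nonempty finite set and let P and Q be probability distributions on Ω with Q(i) > 0 for all i ∈ Ω, and suppose P ≠ Q. Consider the following sampling procedure: draw x̃ ∼ Q and, independently, U uniform on (0,1); if U < P(x̃)/Q(x̃), output x̃; otherwise output a sample from the residual distribution P_residual defined by P_residual(i) = max(P(i) − Q(i), 0) / Σ_{j∈Ω} max(P(j) − Q(j), 0). Then the output is distributed exactly according to P. -/
/-!
The event "output `= j`" is the disjoint union of "the draft is `j` and is accepted" and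
"the draft is rejected and `r = j`". Since `U` is uniform and independent of the draft, the first
event has probability `Q j * min (P j / Q j) 1 = min (P j) (Q j)`. Summing over `j`, a draft is
rejected with probability `1 - ∑ i, min (P i) (Q i) = ∑ i, max (P i - Q i) 0`, which is exactly the
normalising constant of the residual distribution; it is positive because `P ≠ Q`. Independence of
`r` from the pair (draft, `U`) then gives the second event probability `max (P j - Q j) 0`, and
`min (P j) (Q j) + max (P j - Q j) 0 = P j`.
-/

open MeasureTheory ProbabilityTheory

/-- Distinct functions with the same total have a positive total positive part of their
difference. -/
lemma sum_max_sub_pos {Ω : Type*} [Fintype Ω] {P Q : Ω → ℝ} (hsum : ∑ i, P i = ∑ i, Q i)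
    (hPQ : P ≠ Q) : 0 < ∑ i, max (P i - Q i) 0 := by
  refine lt_of_le_of_ne (Finset.sum_nonneg fun i _ => le_max_right _ _) fun h => hPQ ?_
  have h0 := (Finset.sum_eq_zero_iff_of_nonneg fun i _ => le_max_right (P i - Q i) 0).1 h.symm
  have hle : ∀ i ∈ Finset.univ, P i ≤ Q i := fun i hi => by
    have := le_max_left (P i - Q i) 0
    rw [h0 i hi] at this
    linarith
  exact funext fun i => (Finset.sum_eq_sum_iff_of_le hle).1 hsum i (Finset.mem_univ i)

lemma min_add_max_sub (a b : ℝ) : min a b + max (a - b) 0 = a := by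
  rcases le_total a b with h | h
  · rw [min_eq_left h, max_eq_right (by linarith), add_zero]
  · rw [min_eq_right h, max_eq_left (by linarith), add_sub_cancel]

lemma measureReal_lt_of_uniform {Ω' : Type*} [MeasurableSpace Ω'] {μ : Measure Ω'}
    {U : Ω' → ℝ} (hU_meas : Measurable U)
    (hU_law : Measure.map U μ = volume.restrict (Set.Ioo (0 : ℝ) 1)) {t : ℝ} (ht : 0 ≤ t) :
    μ.real (U ⁻¹' Set.Iio t) = min t 1 := by
  have hset : Set.Iio t ∩ Set.Ioo (0 : ℝ) 1 = Set.Ioo 0 (min t 1) := by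
    ext x
    simp only [Set.mem_inter_iff, Set.mem_Iio, Set.mem_Ioo, lt_min_iff]
    tauto
  rw [measureReal_def, ← Measure.map_apply hU_meas measurableSet_Iio, hU_law,
    Measure.restrict_apply measurableSet_Iio, hset, Real.volume_Ioo, sub_zero,
    ENNReal.toReal_ofReal (le_min ht zero_le_one)]

/-- **Correctness of the speculative sampling verification step.**
Draw `x̃ ~ Q` and an independent `U` uniform on `(0,1)`; if `U < P x̃ / Q x̃` output `x̃`,
otherwise output an independent sample `r` from the residual distribution
`i ↦ max (P i - Q i) 0 / ∑ j, max (P j - Q j) 0`. The output is distributed according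
to `P`. -/
theorem speculative_sampling_correct
    (Ω : Type*) [Fintype Ω] [Nonempty Ω] [DecidableEq Ω]
    (P Q : Ω → ℝ) (hP_nonneg : ∀ i, 0 ≤ P i) (hP_sum : ∑ i, P i = 1)
    (hQ_pos : ∀ i, 0 < Q i) (hQ_sum : ∑ i, Q i = 1) (hPQ : P ≠ Q)
    (Ω' : Type*) [MeasurableSpace Ω'] (μ : Measure Ω') [IsProbabilityMeasure μ]
    (xdraft : Ω' → Ω) (U : Ω' → ℝ) (r : Ω' → Ω)
    (hx_meas : Measurable[_, ⊤] xdraft) (hU_meas : Measurable U)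
    (hr_meas : Measurable[_, ⊤] r)
    (hx_law : ∀ i, μ (xdraft ⁻¹' {i}) = ENNReal.ofReal (Q i))
    (hU_law : Measure.map U μ = volume.restrict (Set.Ioo (0 : ℝ) 1))
    (hr_law : ∀ i, μ (r ⁻¹' {i})
        = ENNReal.ofReal (max (P i - Q i) 0 / ∑ j, max (P j - Q j) 0))
    (h_indep_xU : @IndepFun Ω' Ω ℝ _ ⊤ inferInstance xdraft U μ)
    (h_indep_pair_r : @IndepFun Ω' (Ω × ℝ) Ω _
        (@Prod.instMeasurableSpace Ω ℝ ⊤ inferInstance) ⊤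
        (fun ω => (xdraft ω, U ω)) r μ) :
    ∀ j : Ω,
      μ {ω | (if U ω < P (xdraft ω) / Q (xdraft ω) then xdraft ω else r ω) = j}
        = ENNReal.ofReal (P j) := by
  intro j
  let : MeasurableSpace Ω := ⊤
  have hS := sum_max_sub_pos (hP_sum.trans hQ_sum.symm) hPQ
  set S := ∑ i, max (P i - Q i) 0 with hS_def
  have hAcc : ∀ i, μ.real (xdraft ⁻¹' {i} ∩ U ⁻¹' Set.Iio (P i / Q i)) = min (P i) (Q i) := by
    intro i
    rw [measureReal_def, h_indep_xU.measure_inter_preimage_eq_mul _ _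
      (measurableSet_singleton i) measurableSet_Iio, ENNReal.toReal_mul, hx_law,
      ENNReal.toReal_ofReal (hQ_pos i).le, ← measureReal_def,
      measureReal_lt_of_uniform hU_meas hU_law (div_nonneg (hP_nonneg i) (hQ_pos i).le),
      mul_min_of_nonneg _ _ (hQ_pos i).le, mul_div_cancel₀ _ (hQ_pos i).ne', mul_one]
  have hAcc_meas : ∀ i, MeasurableSet (xdraft ⁻¹' {i} ∩ U ⁻¹' Set.Iio (P i / Q i)) := fun i =>
    (hx_meas (measurableSet_singleton i)).inter (hU_meas measurableSet_Iio)
  let V : Set (Ω × ℝ) := {p | p.2 < P p.1 / Q p.1}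
  have hV : MeasurableSet V :=
    measurableSet_lt measurable_snd ((measurable_of_finite fun i => P i / Q i).comp measurable_fst)
  let Z : Ω' → Ω × ℝ := fun ω => (xdraft ω, U ω)
  have hZ : Measurable Z := hx_meas.prodMk hU_meas
  have hZV : Z ⁻¹' V = ⋃ i, xdraft ⁻¹' {i} ∩ U ⁻¹' Set.Iio (P i / Q i) := by
    ext ω
    simp [Z, V]
  have hRej : μ.real (Z ⁻¹' Vᶜ) = S := by
    have hdisj : Pairwise (Function.onFun Disjoint
        fun i => xdraft ⁻¹' {i} ∩ U ⁻¹' Set.Iio (P i / Q i)) := by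
      intro a b hab
      refine Set.disjoint_left.2 fun ω ha hb => hab ?_
      exact (ha.1 : xdraft ω = a).symm.trans hb.1
    have hsplit : ∑ i, min (P i) (Q i) + S = 1 := by
      rw [hS_def, ← Finset.sum_add_distrib, ← hP_sum]
      exact Finset.sum_congr rfl fun i _ => min_add_max_sub _ _
    rw [Set.preimage_compl, probReal_compl_eq_one_sub (hZ hV), hZV,
      measureReal_iUnion_fintype hdisj hAcc_meas, Finset.sum_congr rfl fun i _ => hAcc i]
    linarith
  have hRes : μ.real (Z ⁻¹' Vᶜ ∩ r ⁻¹' {j}) = max (P j - Q j) 0 := by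
    rw [measureReal_def, h_indep_pair_r.measure_inter_preimage_eq_mul _ _ hV.compl
      (measurableSet_singleton j), ENNReal.toReal_mul, hr_law,
      ENNReal.toReal_ofReal (div_nonneg (le_max_right _ _) hS.le), ← measureReal_def, hRej,
      mul_div_cancel₀ _ hS.ne']
  have hEvent : {ω | (if U ω < P (xdraft ω) / Q (xdraft ω) then xdraft ω else r ω) = j}
      = (xdraft ⁻¹' {j} ∩ U ⁻¹' Set.Iio (P j / Q j)) ∪ (Z ⁻¹' Vᶜ ∩ r ⁻¹' {j}) := by
    ext ω
    simp only [Set.mem_ofPred_eq, Set.mem_union, Set.mem_inter_iff, Set.mem_preimage,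
      Set.mem_singleton_iff, Set.mem_Iio, Set.mem_compl_iff, Z, V]
    split_ifs with h
    · constructor
      · rintro rfl
        exact Or.inl ⟨rfl, h⟩
      · rintro (h1 | h1)
        · exact h1.1
        · exact absurd h h1.1
    · constructor
      · exact fun h1 => Or.inr ⟨h, h1⟩
      · rintro (⟨rfl, h1⟩ | h1)
        · exact absurd h1 h
        · exact h1.2
  have hdisj : Disjoint (xdraft ⁻¹' {j} ∩ U ⁻¹' Set.Iio (P j / Q j))
      (Z ⁻¹' Vᶜ ∩ r ⁻¹' {j}) := by
    refine Set.disjoint_left.2 fun ω h1 h2 => h2.1 ?_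
    rw [← Set.mem_preimage, hZV]
    exact Set.mem_iUnion.2 ⟨j, h1⟩
  rw [hEvent, ← ofReal_measureReal, measureReal_union hdisj
    ((hZ hV.compl).inter (hr_meas (measurableSet_singleton j))), hAcc, hRes, min_add_max_sub]
end

section
/- Let Ω be a nonempty finite set, let R be a probability distribution on Ω with R(i) > 0 for all i ∈ Ω, and let D be a finite, nonempty, prefix-free, exhaustive set of nonempty finite strings over Ω. Let W be the induced word distribution on D, W(w) = Π_{t=1}^{|w|} R(w_t). Then the Shannon entropy of W equals the expected word length times the per-symbol entropy: H(W) = (Σ_{w∈D} W(w)·|w|) · H(R), where H denotes Shannon entropy with logarithm base 2. -/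
open Finset

/-!
The identity is Wald's identity for the self-information `-log₂ R`. Put
`g i = logb 2 (R i) + H(R)`, which has mean zero under `R`. The additive extension of `g` to words
then has mean zero under the word distribution of any complete prefix-free dictionary
(`wald_identity`), and expanding `∑ t, g (w t) = logb 2 (W w) + |w| * H(R)` gives the claim.

The mean-zero statement is proved together with `∑ w ∈ D, W w = 1` by induction on the maximal word
length: either `D = {[]}`, or `D` splits according to the first letter `a` into the dictionaries
`{v | a :: v ∈ D}`, which are again prefix-free and exhaustive and have shorter words. The empty
word has to be allowed in the induction, since these smaller dictionaries may be `{[]}`.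
-/

/-- The dictionary of continuations of the letter `a`: all `v` with `a :: v ∈ D`. -/
noncomputable def branch {Ω : Type*} (D : Finset (List Ω)) (a : Ω) : Finset (List Ω) :=
  D.preimage (List.cons a) (List.cons_injective.injOn)

lemma mem_branch {Ω : Type*} {D : Finset (List Ω)} {a : Ω} {v : List Ω} :
    v ∈ branch D a ↔ a :: v ∈ D := by
  simp [branch]

lemma sum_eq_sum_branch {Ω : Type*} [Fintype Ω] {D : Finset (List Ω)} (h : [] ∉ D)
    (F : List Ω → ℝ) : ∑ w ∈ D, F w = ∑ a, ∑ v ∈ branch D a, F (a :: v) := by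
  rw [Finset.sum_sigma']
  symm
  refine Finset.sum_bij (fun x _ => x.1 :: x.2) ?_ ?_ ?_ ?_
  · rintro ⟨a, v⟩ hx
    simpa [mem_branch] using hx
  · rintro ⟨a, v⟩ _ ⟨b, u⟩ _ hxy
    simp only [List.cons.injEq] at hxy
    obtain ⟨rfl, rfl⟩ := hxy
    rfl
  · intro w hw
    cases w with
    | nil => exact absurd hw h
    | cons a v => exact ⟨⟨a, v⟩, by simpa [mem_branch] using hw, rfl⟩
  · intro _ _
    rfl

/-- Words of a complete prefix-free dictionary have total probability one, and a mean-zero additive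
functional has mean zero over them. -/
lemma wald_identity {Ω : Type*} [Fintype Ω] [Nonempty Ω] (R g : Ω → ℝ)
    (hR_sum : ∑ i, R i = 1) (hg : ∑ i, R i * g i = 0) (N : ℕ) :
    ∀ D : Finset (List Ω), (∀ w ∈ D, w.length ≤ N) →
      (∀ w ∈ D, ∀ w' ∈ D, w <+: w' → w = w') →
      (∀ s : ℕ → Ω, ∃ n : ℕ, (List.ofFn fun i : Fin n => s i) ∈ D) →
      ∑ w ∈ D, (w.map R).prod = 1 ∧ ∑ w ∈ D, (w.map R).prod * (w.map g).sum = 0 := by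
  induction N with
  | zero =>
    intro D hlen hpf hex
    have hnil : [] ∈ D := by
      obtain ⟨n, hn⟩ := hex fun _ => Classical.arbitrary Ω
      rwa [List.eq_nil_of_length_eq_zero (Nat.le_zero.mp (hlen _ hn))] at hn
    have hD : D = {[]} := Finset.eq_singleton_iff_unique_mem.mpr
      ⟨hnil, fun w hw => (hpf [] hnil w hw List.nil_prefix).symm⟩
    simp [hD]
  | succ N ih =>
    intro D hlen hpf hex
    by_cases hnil : [] ∈ D
    · have hD : D = {[]} := Finset.eq_singleton_iff_unique_mem.mpr
        ⟨hnil, fun w hw => (hpf [] hnil w hw List.nil_prefix).symm⟩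
      simp [hD]
    have key : ∀ a, ∑ v ∈ branch D a, (v.map R).prod = 1 ∧
        ∑ v ∈ branch D a, (v.map R).prod * (v.map g).sum = 0 := by
      intro a
      apply ih
      · intro v hv
        simpa using hlen _ (mem_branch.mp hv)
      · intro v hv u hu hvu
        simpa using hpf _ (mem_branch.mp hv) _ (mem_branch.mp hu)
          ((List.prefix_cons_inj a).mpr hvu)
      · intro s
        -- A prefix in `D` of the sequence `a, s 0, s 1, …` yields one of `s` in the branch.
        obtain ⟨n, hn⟩ := hex fun k => Nat.casesOn k a s
        cases n with
        | zero => exact absurd (by simpa using hn) hnil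
        | succ n =>
          refine ⟨n, mem_branch.mpr ?_⟩
          simpa [List.ofFn_succ] using hn
    rw [sum_eq_sum_branch hnil, sum_eq_sum_branch hnil]
    constructor
    · simp only [List.map_cons, List.prod_cons, ← Finset.mul_sum, (key _).1, mul_one, hR_sum]
    · rw [← hg]
      refine Finset.sum_congr rfl fun a _ => ?_
      calc ∑ v ∈ branch D a, ((a :: v).map R).prod * ((a :: v).map g).sum
          = R a * g a * ∑ v ∈ branch D a, (v.map R).prod
            + R a * ∑ v ∈ branch D a, (v.map R).prod * (v.map g).sum := by
            rw [Finset.mul_sum, Finset.mul_sum, ← Finset.sum_add_distrib]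
            refine Finset.sum_congr rfl fun v _ => ?_
            simp only [List.map_cons, List.prod_cons, List.sum_cons]
            ring
        _ = R a * g a := by rw [(key a).1, (key a).2]; ring

lemma sum_map_logb_add {Ω : Type*} (R : Ω → ℝ) (hR_pos : ∀ i, 0 < R i) (c : ℝ) (w : List Ω) :
    (w.map fun i => Real.logb 2 (R i) + c).sum
      = Real.logb 2 (w.map R).prod + w.length * c := by
  induction w with
  | nil => simp
  | cons a v ih =>
    have hv : (v.map R).prod ≠ 0 := by
      simpa [List.prod_eq_zero_iff] using fun x _ => (hR_pos x).ne'
    simp only [List.map_cons, List.sum_cons, List.prod_cons, List.length_cons, ih,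
      Real.logb_mul (hR_pos a).ne' hv]
    push_cast
    ring

/-- **Entropy of the induced word distribution.**
Let `D` be a finite, nonempty, prefix-free, exhaustive dictionary over a nonempty finite
alphabet `Ω` and `R` a probability distribution on `Ω` with `R i > 0` for all `i`.
The Shannon entropy (base 2) of the induced word distribution `W w = ∏ t, R (w t)` on `D`
equals the expected word length times the per-symbol entropy `H(R)`. -/
theorem dictionary_entropy_eq_expected_length_mul_entropy
    (Ω : Type*) [Fintype Ω] [Nonempty Ω] [DecidableEq Ω]
    (D : Finset (List Ω)) (hD_nonempty : D.Nonempty)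
    (hD_ne_nil : ∀ w ∈ D, w ≠ [])
    (hD_prefix_free : ∀ w ∈ D, ∀ w' ∈ D, w <+: w' → w = w')
    (hD_exhaustive : ∀ s : ℕ → Ω, ∃ n : ℕ, (List.ofFn fun i : Fin n => s i) ∈ D)
    (R : Ω → ℝ) (hR_pos : ∀ i, 0 < R i) (hR_sum : ∑ i, R i = 1) :
    -∑ w ∈ D, (w.map R).prod * Real.logb 2 (w.map R).prod
      = (∑ w ∈ D, (w.map R).prod * (w.length : ℝ))
        * (-∑ i, R i * Real.logb 2 (R i)) := by
  set H : ℝ := -∑ i, R i * Real.logb 2 (R i) with hH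
  have hg : ∑ i, R i * (Real.logb 2 (R i) + H) = 0 := by
    simp only [mul_add, Finset.sum_add_distrib, ← Finset.sum_mul, hR_sum]
    rw [hH]
    ring
  have hw := (wald_identity R _ hR_sum hg (D.sup List.length) D
    (fun w hw => Finset.le_sup (f := List.length) hw) hD_prefix_free hD_exhaustive).2
  simp only [sum_map_logb_add R hR_pos, mul_add, Finset.sum_add_distrib, ← mul_assoc,
    ← Finset.sum_mul] at hw
  linarith
end

section
/- Let Ω be a finite set with |Ω| ≥ 2, let R be a probability distribution on Ω with R(i) > 0 for all i ∈ Ω and with Shannon entropy H(R) > 0, and let k ≥ 0 be an integer. Let D be the leaf set of any finite rooted |Ω|-ary tree with exactly k+1 internal nodes in which every internal node has exactly |Ω| children, and let W(w) = Π_{t=1}^{|w|} R(w_t) be the induced word distribution on D. Then the expected word length satisfies Σ_{w∈D} W(w)·|w| ≤ log₂(k(|Ω|−1) + |Ω|) / H(R) ≤ (log₂|Ω| + log₂(k+1)) / H(R). -/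
/-!
Every node of the tree other than the root is the child `w ++ [a]` of a unique internal node `w`.
Hence, for every real function `F` on words, telescoping over the tree gives
`∑_{leaves} F = F [] + ∑_{internal w} (∑ a, F (w ++ [a]) - F w)` (`sum_leaves`).
Four choices of `F` carry the argument. `F = 1` counts the leaves: `|D| = k (|Ω| - 1) + |Ω|`.
`F = W` shows that `W` has total mass `1` on the leaves. `F = W * length` and `F = W * log W` both
reduce to a multiple of `∑_{internal w} W w`, so that the leaf entropy is `H(R)` times the expected
length. Gibbs' inequality, `H(W) ≤ log |D|`, then gives the first bound; the second is
`k (|Ω| - 1) + |Ω| ≤ |Ω| (k + 1)`.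
-/

open Finset

/-- Telescoping over a finite full tree: the sum over the leaves is the value at the root plus the
increments from each internal node to its children. -/
lemma sum_leaves {Ω : Type*} [Fintype Ω] [DecidableEq Ω] (T : Finset (List Ω))
    (hT_root : [] ∈ T)
    (hT_prefix_closed : ∀ w ∈ T, ∀ w' : List Ω, w' <+: w → w' ∈ T)
    (hT_full : ∀ w ∈ T, (∃ a : Ω, w ++ [a] ∈ T) → ∀ a : Ω, w ++ [a] ∈ T)
    (F : List Ω → ℝ) :
    ∑ w ∈ T.filter (fun w => ∀ a : Ω, w ++ [a] ∉ T), F w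
      = F [] + ∑ w ∈ T.filter (fun w => ∃ a : Ω, w ++ [a] ∈ T), (∑ a, F (w ++ [a]) - F w) := by
  -- The nodes other than the root are exactly the children of internal nodes.
  have himg : T.erase [] = ((T.filter fun w => ∃ a : Ω, w ++ [a] ∈ T) ×ˢ univ).image
      (fun p : List Ω × Ω => p.1 ++ [p.2]) := by
    ext w
    simp only [mem_erase, mem_image, mem_product, mem_filter, mem_univ, and_true, Prod.exists]
    constructor
    · rintro ⟨hne, hw⟩
      obtain ⟨v, a, rfl⟩ : ∃ v a, w = v ++ [a] :=
        ⟨_, _, (List.dropLast_append_getLast hne).symm⟩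
      exact ⟨v, a, ⟨hT_prefix_closed _ hw _ (List.prefix_append _ _), a, hw⟩, rfl⟩
    · rintro ⟨v, a, ⟨hv, hc⟩, rfl⟩
      exact ⟨by simp, hT_full v hv hc a⟩
  have hchildren : ∑ w ∈ T.erase [], F w
      = ∑ w ∈ T.filter (fun w => ∃ a : Ω, w ++ [a] ∈ T), ∑ a, F (w ++ [a]) := by
    rw [himg, sum_image, sum_product]
    rintro ⟨v, a⟩ _ ⟨v', a'⟩ _ h
    simpa using List.append_inj' h rfl
  have hroot := add_sum_erase T F hT_root
  have hsplit := sum_filter_add_sum_filter_not T (fun w => ∃ a : Ω, w ++ [a] ∈ T) F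
  simp only [not_exists] at hsplit
  rw [sum_sub_distrib, ← hchildren]
  linarith

/-- Gibbs' inequality against the uniform distribution: entropy is at most the logarithm of the
size of the support. -/
lemma sum_negMulLog_le_log_card {α : Type*} (D : Finset α) (W : α → ℝ)
    (hpos : ∀ w, 0 < W w) (hsum : ∑ w ∈ D, W w = 1) :
    -∑ w ∈ D, W w * Real.log (W w) ≤ Real.log D.card := by
  have hn : (0 : ℝ) < D.card := by
    rw [Nat.cast_pos, card_pos, nonempty_iff_ne_empty]
    rintro rfl
    simp at hsum
  -- `log x ≤ x - 1` at `x = 1 / (|D| W w)`.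
  have key : ∀ w ∈ D, -(W w * Real.log (W w)) - W w * Real.log D.card ≤ 1 / D.card - W w := by
    intro w _
    have hw := hpos w
    have h := Real.log_le_sub_one_of_pos (inv_pos.2 (mul_pos hn hw))
    rw [Real.log_inv, Real.log_mul hn.ne' hw.ne'] at h
    have h2 := mul_le_mul_of_nonneg_left h hw.le
    have h3 : W w * (((D.card : ℝ) * W w)⁻¹ - 1) = 1 / D.card - W w := by
      field_simp
    linarith
  have h := sum_le_sum key
  rw [sum_sub_distrib, sum_sub_distrib, ← sum_mul, hsum, sum_neg_distrib, sum_const,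
    nsmul_eq_mul, mul_one_div_cancel hn.ne'] at h
  linarith

/-- **Upper bound via Tunstall coding (Theorem 1).**
Let `R` be a probability distribution on a finite alphabet `Ω` (`|Ω| ≥ 2`) with `R i > 0`
and entropy `H(R) > 0`. Let `D` be the leaf set of a finite rooted `|Ω|`-ary tree with
exactly `k + 1` internal nodes, each with exactly `|Ω|` children, and let
`W w = ∏ t, R (w t)` be the induced word distribution on `D`. Then the expected word
length is at most `log₂(k(|Ω|-1) + |Ω|) / H(R) ≤ (log₂ |Ω| + log₂ (k+1)) / H(R)`. -/
theorem tunstall_upper_bound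
    (Ω : Type*) [Fintype Ω] [DecidableEq Ω] (hΩ : 2 ≤ Fintype.card Ω)
    (R : Ω → ℝ) (hR_pos : ∀ i, 0 < R i) (hR_sum : ∑ i, R i = 1)
    (hH_pos : 0 < -∑ i, R i * Real.logb 2 (R i))
    (k : ℕ)
    (T : Finset (List Ω))
    (hT_root : [] ∈ T)
    (hT_prefix_closed : ∀ w ∈ T, ∀ w' : List Ω, w' <+: w → w' ∈ T)
    (hT_full : ∀ w ∈ T, (∃ a : Ω, w ++ [a] ∈ T) → ∀ a : Ω, w ++ [a] ∈ T)
    (hT_internal : (T.filter fun w => ∃ a : Ω, w ++ [a] ∈ T).card = k + 1)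
    (D : Finset (List Ω))
    (hD : D = T.filter fun w => ∀ a : Ω, w ++ [a] ∉ T) :
    (∑ w ∈ D, (w.map R).prod * (w.length : ℝ))
        ≤ Real.logb 2 (k * (Fintype.card Ω - 1) + Fintype.card Ω)
            / (-∑ i, R i * Real.logb 2 (R i)) ∧
    Real.logb 2 (k * (Fintype.card Ω - 1) + Fintype.card Ω)
        / (-∑ i, R i * Real.logb 2 (R i))
      ≤ (Real.logb 2 (Fintype.card Ω) + Real.logb 2 (k + 1))
            / (-∑ i, R i * Real.logb 2 (R i)) := by
  subst hD
  have hlog2 : 0 < Real.log 2 := Real.log_pos one_lt_two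
  have hΩ' : (2 : ℝ) ≤ Fintype.card Ω := by exact_mod_cast hΩ
  have hk : (0 : ℝ) ≤ k := k.cast_nonneg
  have hWpos : ∀ w : List Ω, 0 < (w.map R).prod := by
    intro w
    induction w with
    | nil => simp
    | cons a w ih => simpa using mul_pos (hR_pos a) ih
  have tel := sum_leaves T hT_root hT_prefix_closed hT_full
  set D := T.filter fun w => ∀ a : Ω, w ++ [a] ∉ T
  set I := T.filter fun w => ∃ a : Ω, w ++ [a] ∈ T
  have hcard : (D.card : ℝ) = k * (Fintype.card Ω - 1) + Fintype.card Ω := by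
    have h := tel fun _ => 1
    simp only [sum_const, hT_internal, card_univ, nsmul_eq_mul, mul_one] at h
    push_cast at h
    linarith
  have hmass : ∑ w ∈ D, (w.map R).prod = 1 := by
    rw [tel]
    simp [← mul_sum, hR_sum]
  have hlen : ∑ w ∈ D, (w.map R).prod * (w.length : ℝ) = ∑ w ∈ I, (w.map R).prod := by
    rw [tel]
    simp only [List.map_nil, List.length_nil, Nat.cast_zero, mul_zero, zero_add]
    refine sum_congr rfl fun w _ => ?_
    simp only [List.map_append, List.map_cons, List.map_nil, List.prod_append, List.prod_singleton,
      List.length_append, List.length_singleton, ← sum_mul, ← mul_sum, hR_sum]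
    push_cast
    ring
  have hent : ∑ w ∈ D, (w.map R).prod * Real.log (w.map R).prod
      = (∑ w ∈ I, (w.map R).prod) * ∑ a, R a * Real.log (R a) := by
    rw [tel, sum_mul]
    simp only [List.map_nil, List.prod_nil, Real.log_one, mul_zero, zero_add]
    refine sum_congr rfl fun w _ => ?_
    have h : ∀ a, ((w ++ [a]).map R).prod * Real.log ((w ++ [a]).map R).prod
        = (w.map R).prod * Real.log (w.map R).prod * R a
          + (w.map R).prod * (R a * Real.log (R a)) := by
      intro a
      simp only [List.map_append, List.map_cons, List.map_nil, List.prod_append,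
        List.prod_singleton]
      rw [Real.log_mul (hWpos w).ne' (hR_pos a).ne']
      ring
    simp only [h, sum_add_distrib, ← mul_sum, hR_sum]
    ring
  have hgibbs := sum_negMulLog_le_log_card D _ hWpos hmass
  have hH : -∑ i, R i * Real.logb 2 (R i) = -(∑ a, R a * Real.log (R a)) / Real.log 2 := by
    simp only [Real.logb, ← mul_div_assoc, ← sum_div, neg_div]
  constructor
  · rw [le_div_iff₀ hH_pos, hH, hlen, ← hcard, Real.logb, ← mul_div_assoc]
    refine div_le_div_of_nonneg_right ?_ hlog2.le
    rw [mul_neg, ← hent]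
    exact hgibbs
  · refine div_le_div_of_nonneg_right ?_ hH_pos.le
    rw [← Real.logb_mul (by positivity) (by positivity)]
    refine Real.logb_le_logb_of_le one_lt_two ?_ ?_
    · nlinarith
    · nlinarith
end

section
/- Let V be a finite nonempty set of nonempty finite sequences of natural numbers that is closed under nonempty prefixes (i.e., if j ∈ V has length ≥ 2 then every nonempty proper prefix of j is in V), and let f : V → ℝ satisfy f(j) ≥ f(j′) whenever j is a proper prefix of j′ (f is antitone along the ancestor relation). Then for every integer k with 1 ≤ k ≤ |V|, there exists a k-element subset S ⊆ V that is closed under nonempty prefixes and satisfies Σ_{j∈S} f(j) ≥ Σ_{j∈S′} f(j) for every k-element subset S′ ⊆ V; moreover, S can be taken to consist of k elements of V with the k largest f-values. -/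
/-!
A `k`-element set `S` whose values dominate those on the rest of `V` maximizes the sum, since any
other `k`-set is obtained from it by exchanging equally many elements, none of which gains
(`sum_le_sum_of_top`). It remains to choose such a set prefix-closed. It is built greedily, one node
at a time (`exists_closed_top`): the next node has the largest `f`-value among the remaining nodes
and, among ties, the smallest length. Antitonicity alone does not exclude a tie between a node and
a missing ancestor; the tie-break does, because proper prefixes are strictly shorter.
-/

open Finset

/-- Exchange argument: equally many elements lie in `S' \ S` and in `S \ S'`, and the maximum of `f`
on the former separates the values on the two sets. -/
theorem sum_le_sum_of_top {α : Type*} [DecidableEq α] {V S S' : Finset α} {f : α → ℝ}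
    (htop : ∀ j ∈ S, ∀ j' ∈ V, j' ∉ S → f j' ≤ f j) (hS' : S' ⊆ V) (hcard : S'.card = S.card) :
    ∑ j ∈ S', f j ≤ ∑ j ∈ S, f j := by
  have hsdiff : (S' \ S).card = (S \ S').card := card_sdiff_comm hcard
  have key : ∑ j ∈ S' \ S, f j ≤ ∑ j ∈ S \ S', f j := by
    rcases (S' \ S).eq_empty_or_nonempty with h | h
    · have h' : S \ S' = ∅ := by rw [← card_eq_zero, ← hsdiff, h, card_empty]
      rw [h, h']
    · obtain ⟨m, hm, hmax⟩ := exists_max_image _ f h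
      rw [mem_sdiff] at hm
      calc ∑ j ∈ S' \ S, f j ≤ (S' \ S).card • f m := sum_le_card_nsmul _ _ _ hmax
        _ = (S \ S').card • f m := by rw [hsdiff]
        _ ≤ ∑ j ∈ S \ S', f j := card_nsmul_le_sum _ _ _ fun j hj =>
            htop j (mem_sdiff.1 hj).1 m (hS' hm.1) hm.2
  linarith [sum_sdiff_sub_sum_sdiff (s₁ := S) (s₂ := S') (f := f)]

/-- The greedy construction, by induction on `k`. -/
theorem exists_closed_top (V : Finset (List ℕ))
    (hV : ∀ j ∈ V, ∀ j' : List ℕ, j' ≠ [] → j' <+: j → j' ≠ j → j' ∈ V)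
    (f : List ℕ → ℝ)
    (hf : ∀ j ∈ V, ∀ j' ∈ V, j <+: j' → j ≠ j' → f j' ≤ f j) (k : ℕ) (hk : k ≤ V.card) :
    ∃ S ⊆ V, S.card = k ∧
      (∀ j ∈ S, ∀ j' : List ℕ, j' ≠ [] → j' <+: j → j' ≠ j → j' ∈ S) ∧
      (∀ j ∈ S, ∀ j' ∈ V, j' ∉ S → f j' ≤ f j) := by
  induction k with
  | zero => exact ⟨∅, by simp⟩
  | succ k ih =>
    obtain ⟨S, hSV, hcard, hclosed, htop⟩ := ih (by omega)
    have hne : (V \ S).Nonempty := by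
      rw [← card_pos, card_sdiff_of_subset hSV]
      omega
    -- The lexicographic key maximizes `f` first and then minimizes the length.
    obtain ⟨x, hx, hmax⟩ :=
      exists_max_image (V \ S) (fun j => toLex (f j, -(j.length : ℤ))) hne
    simp only [Prod.Lex.toLex_le_toLex] at hmax
    rw [mem_sdiff] at hx
    refine ⟨insert x S, insert_subset hx.1 hSV, by rw [card_insert_of_notMem hx.2, hcard], ?_, ?_⟩
    · intro j hj j' hnil hpre hneq
      rcases mem_insert.1 hj with rfl | hj
      · by_contra hj'
        have hj'S : j' ∉ S := fun h => hj' (mem_insert_of_mem h)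
        have hj'V := hV j hx.1 j' hnil hpre hneq
        have hge := hf j' hj'V j hx.1 hpre hneq
        have hlen : j'.length ≠ j.length := fun h => hneq (hpre.eq_of_length h)
        have hle := hpre.length_le
        rcases hmax j' (mem_sdiff.2 ⟨hj'V, hj'S⟩) with h | h
        · linarith
        · omega
      · exact mem_insert_of_mem (hclosed j hj j' hnil hpre hneq)
    · intro j hj j' hj'V hj'
      have hj'S : j' ∉ S := fun h => hj' (mem_insert_of_mem h)
      rcases mem_insert.1 hj with rfl | hj
      · rcases hmax j' (mem_sdiff.2 ⟨hj'V, hj'S⟩) with h | h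
        · exact h.le
        · exact h.1.le
      · exact htop j hj j' hj'V hj'S

/-- **Greedy optimality of top-`k` selection under an antitone acceptance function.**
Let `V` be a finite nonempty set of nonempty finite sequences of naturals closed under
nonempty prefixes, and `f : V → ℝ` antitone along the proper-prefix (ancestor) relation.
Then for every `1 ≤ k ≤ |V|` there is a `k`-element subset `S ⊆ V`, closed under nonempty
prefixes, maximizing `∑_{j ∈ S} f j` among all `k`-element subsets of `V`; moreover `S`
can be taken to consist of `k` elements with the `k` largest `f`-values. -/
theorem greedy_topk_tree
    (V : Finset (List ℕ)) (hV_nonempty : V.Nonempty)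
    (hV_ne_nil : ∀ j ∈ V, j ≠ [])
    (hV_prefix_closed : ∀ j ∈ V, ∀ j' : List ℕ, j' ≠ [] → j' <+: j → j' ≠ j → j' ∈ V)
    (f : List ℕ → ℝ)
    (hf_antitone : ∀ j ∈ V, ∀ j' ∈ V, j <+: j' → j ≠ j' → f j' ≤ f j) :
    ∀ k : ℕ, 1 ≤ k → k ≤ V.card →
      ∃ S ⊆ V, S.card = k ∧
        (∀ j ∈ S, ∀ j' : List ℕ, j' ≠ [] → j' <+: j → j' ≠ j → j' ∈ S) ∧
        (∀ S' ⊆ V, S'.card = k → ∑ j ∈ S', f j ≤ ∑ j ∈ S, f j) ∧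
        (∀ j ∈ S, ∀ j' ∈ V, j' ∉ S → f j' ≤ f j) := by
  intro k _ hk
  obtain ⟨S, hSV, hcard, hclosed, htop⟩ := exists_closed_top V hV_prefix_closed f hf_antitone k hk
  exact ⟨S, hSV, hcard, hclosed,
    fun S' hS' hc => sum_le_sum_of_top htop hS' (hc.trans hcard.symm), htop⟩
end
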